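/- Let U be a positive bounded linear operator on the complex space X_ℂ = L^p(E, μ; ℂ) whose restriction to the real subspace is strictly positive, with spectral radius r(U) > 0, and assume U admits a splitting U = W + K with bounded linear operators W and K such that ‖W‖ < r(U) and K(λ − W)⁻¹ is power compact for every λ ∈ ℂ with |λ| > ‖W‖. Then every eigenvalue of U of modulus r(U) is equal to r(U); equivalently, the peripheral point spectrum of Ũ := U / r(U) is reduced to {1}. -/

import Mathlib

/-!
Let `χ_s = s ψ (s - T)⁻¹` for a positive functional `ψ`, where `T` is the restriction of `U` to the
real subspace. An eigenvector of modulus `r` forces `‖χ_s‖ → ∞` as `s ↓ r`, while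
`χ_s (r - T) / ‖χ_s‖ → 0` in norm. Since `r - T` has a right inverse modulo compact operators, no
weak-* limit `φ` of `χ_s / ‖χ_s‖` vanishes, and strict positivity of `T` turns `φ ∘ T = r φ` into
`φ > 0` on nonzero positive functions. If `U f = z f` with `|z| = r` and `z ≠ r`, then
`φ (Re (w f)) = 0` for all `w`, so `Re (w f)` changes sign and `N w = φ |Re (w f)|` satisfies
`N (z w) < r N w`. This is impossible at `w = (r / z) v` for a maximum `v` of `N` on the unit
circle.
-/

open MeasureTheory Filter ENNReal

open scoped Topology

section CompactPerturbation

variable {𝕜 E F G : Type*} [RCLike 𝕜] [NormedAddCommGroup E] [NormedSpace 𝕜 E]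
  [NormedAddCommGroup F] [NormedSpace 𝕜 F] [NormedAddCommGroup G] [NormedSpace 𝕜 G]

theorem tendsto_norm_comp_of_isCompactOperator {ι : Type*} {l : Filter ι} {φ : ι → E →L[𝕜] F}
    {M : ℝ} (hφ : ∀ᶠ i in l, ‖φ i‖ ≤ M) (hlim : ∀ x, Tendsto (fun i => φ i x) l (𝓝 0))
    {C : G →L[𝕜] E} (hC : IsCompactOperator C) :
    Tendsto (fun i => ‖(φ i).comp C‖) l (𝓝 0) := by
  refine tendsto_order.2 ⟨fun a ha => .of_forall fun i => ha.trans_le (norm_nonneg _),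
    fun ε hε => ?_⟩
  obtain ⟨δ, hδ, hMδ⟩ := exists_pos_mul_lt (half_pos (half_pos hε)) M
  obtain ⟨t, -, htfin, ht⟩ :=
    (hC.isCompact_closure_image_closedBall (f := C.toLinearMap) 1).finite_cover_balls hδ
  have hsmall : ∀ᶠ i in l, ∀ y ∈ t, ‖φ i y‖ < ε / 4 :=
    (eventually_all_finite htfin).2 fun y _ =>
      (hlim y).norm.eventually (gt_mem_nhds (by rw [norm_zero]; positivity))
  filter_upwards [hφ, hsmall] with i hi hit
  suffices ‖(φ i).comp C‖ ≤ ε / 2 by linarith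
  refine ContinuousLinearMap.opNorm_le_of_unit_norm (𝕜 := 𝕜) (by positivity) fun x hx => ?_
  have hmem : C x ∈ closure (C.toLinearMap '' Metric.closedBall 0 1) :=
    subset_closure ⟨x, by simp [hx], rfl⟩
  obtain ⟨y, hy, hxy⟩ := Set.mem_iUnion₂.1 (ht hmem)
  have hdist : ‖φ i (C x - y)‖ ≤ M * δ :=
    (φ i).le_of_opNorm_le_of_le hi (mem_ball_iff_norm.1 hxy).le
  calc ‖φ i (C x)‖ = ‖φ i (C x - y) + φ i y‖ := by rw [map_sub, sub_add_cancel]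
    _ ≤ ‖φ i (C x - y)‖ + ‖φ i y‖ := norm_add_le _ _
    _ ≤ ε / 2 := by linarith [hit y hy]

theorem exists_tendsto_ultrafilter {ι : Type*} {l : Filter ι} [l.NeBot] {φ : ι → E →L[𝕜] 𝕜}
    {M : ℝ} (hφ : ∀ᶠ i in l, ‖φ i‖ ≤ M) :
    ∃ (φ₀ : E →L[𝕜] 𝕜) (l' : Ultrafilter ι), ↑l' ≤ l ∧
      ∀ x, Tendsto (fun i => φ i x) l' (𝓝 (φ₀ x)) := by
  let Φ : ι → WeakDual 𝕜 E := fun i => StrongDual.toWeakDual (φ i)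
  obtain ⟨φ₀, -, hφ₀⟩ := (WeakDual.isCompact_closedBall (𝕜 := 𝕜) (E := E) 0 M).ultrafilter_le_nhds
    ((Ultrafilter.of l).map Φ) <| by
      rw [Ultrafilter.coe_map, le_principal_iff, mem_map]
      filter_upwards [Ultrafilter.of_le l hφ] with i hi
      simpa [Φ] using hi
  exact ⟨WeakDual.toStrongDual φ₀, Ultrafilter.of l, Ultrafilter.of_le l, fun x =>
    ((WeakDual.eval_continuous x).tendsto φ₀).comp hφ₀⟩

theorem exists_tendsto_ne_zero_of_isCompactOperator_one_sub {ι : Type*} {l : Filter ι} [l.NeBot]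
    {φ : ι → E →L[𝕜] 𝕜} (hφ : ∀ᶠ i in l, ‖φ i‖ = 1) {V : F →L[𝕜] E} {R : E →L[𝕜] F}
    (hV : Tendsto (fun i => ‖(φ i).comp V‖) l (𝓝 0))
    (hR : IsCompactOperator ⇑(.id 𝕜 E - V.comp R)) :
    ∃ (φ₀ : E →L[𝕜] 𝕜) (l' : Ultrafilter ι), φ₀ ≠ 0 ∧ ↑l' ≤ l ∧
      ∀ x, Tendsto (fun i => φ i x) l' (𝓝 (φ₀ x)) := by
  have hle : ∀ᶠ i in l, ‖φ i‖ ≤ 1 := hφ.mono fun _ hi => hi.le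
  obtain ⟨φ₀, l', hl, hlim⟩ := exists_tendsto_ultrafilter hle
  refine ⟨φ₀, l', ?_, hl, hlim⟩
  rintro rfl
  have hcompact := tendsto_norm_comp_of_isCompactOperator (hle.filter_mono hl) hlim hR
  have hsmall :
      Tendsto (fun i => ‖(φ i).comp V‖ * ‖R‖ + ‖(φ i).comp (.id 𝕜 E - V.comp R)‖) l' (𝓝 0) := by
    simpa using ((hV.mono_left hl).mul_const ‖R‖).add hcompact
  obtain ⟨i, hi, hlt⟩ := ((hφ.filter_mono hl).and (hsmall.eventually (gt_mem_nhds one_pos))).exists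
  have hsplit : φ i = ((φ i).comp V).comp R + (φ i).comp (.id 𝕜 E - V.comp R) := by ext; simp
  have := calc (1 : ℝ) = ‖φ i‖ := hi.symm
    _ = ‖((φ i).comp V).comp R + (φ i).comp (.id 𝕜 E - V.comp R)‖ := congrArg norm hsplit
    _ ≤ ‖(φ i).comp V‖ * ‖R‖ + ‖(φ i).comp (.id 𝕜 E - V.comp R)‖ :=
      norm_add_le_of_le (ContinuousLinearMap.opNorm_comp_le _ _) le_rfl
  exact this.not_gt hlt

theorem exists_isCompactOperator_one_sub_mul {V R : E →L[𝕜] E} {n : ℕ}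
    (h : IsCompactOperator ⇑((1 - V * R) ^ n)) :
    ∃ S : E →L[𝕜] E, IsCompactOperator ⇑(1 - V * S) := by
  refine ⟨R * ∑ k ∈ Finset.range n, (1 - V * R) ^ k, ?_⟩
  have hgeom : V * R * ∑ k ∈ Finset.range n, (1 - V * R) ^ k = 1 - (1 - V * R) ^ n := by
    simpa using mul_neg_geom_sum (1 - V * R) n
  rwa [← mul_assoc, hgeom, sub_sub_self]

theorem isUnit_smul_one_sub [CompleteSpace E] {W : E →L[𝕜] E} {a : 𝕜} (ha : ‖W‖ < ‖a‖) :
    IsUnit (a • 1 - W) := by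
  have hone : ‖W‖ * ‖(1 : E →L[𝕜] E)‖ < ‖a‖ :=
    (mul_le_of_le_one_right (norm_nonneg W) ContinuousLinearMap.norm_id_le).trans_lt ha
  rw [← Algebra.algebraMap_eq_smul_one]
  exact spectrum.mem_resolventSet_iff.1 (spectrum.mem_resolventSet_of_norm_lt_mul hone)

theorem exists_isCompactOperator_one_sub_smul_one_sub_add_mul [CompleteSpace E]
    {W K : E →L[𝕜] E} {a : 𝕜} (ha : ‖W‖ < ‖a‖) {n : ℕ}
    (hK : IsCompactOperator ⇑((K * Ring.inverse (a • 1 - W)) ^ n)) :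
    ∃ R : E →L[𝕜] E, IsCompactOperator ⇑(1 - (a • 1 - (W + K)) * R) := by
  have hparametrix : 1 - (a • 1 - (W + K)) * Ring.inverse (a • 1 - W)
      = K * Ring.inverse (a • 1 - W) := by
    rw [← sub_sub, sub_mul, Ring.mul_inverse_cancel _ (isUnit_smul_one_sub ha), sub_sub_self]
  rw [← hparametrix] at hK
  exact exists_isCompactOperator_one_sub_mul hK

end CompactPerturbation

section NeumannSeries

/-- Every `t > r` eventually dominates `‖T ^ n‖ ^ (1 / n)`, i.e. the spectral radius of `T`, in
the sense of Gelfand's formula, is at most `r`. Unlike `spectralRadius`, this passes from a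
complex operator to its real part. -/
def HasPowerGrowthBound {𝕜 E : Type*} [NontriviallyNormedField 𝕜] [SeminormedAddCommGroup E]
    [NormedSpace 𝕜 E] (T : E →L[𝕜] E) (r : ℝ) : Prop :=
  ∀ t, r < t → ∀ᶠ n : ℕ in atTop, ‖T ^ n‖ ≤ t ^ n

theorem hasPowerGrowthBound_of_tendsto {𝕜 E : Type*} [NontriviallyNormedField 𝕜]
    [SeminormedAddCommGroup E] [NormedSpace 𝕜 E] {T : E →L[𝕜] E} {r : ℝ}
    (h : Tendsto (fun n : ℕ => ‖T ^ n‖ ^ (1 / (n : ℝ))) atTop (𝓝 r)) :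
    HasPowerGrowthBound T r := by
  intro t ht
  filter_upwards [h.eventually (gt_mem_nhds ht), eventually_ne_atTop 0] with n hn hn0
  have hpow := pow_le_pow_left₀ (by positivity) hn.le n
  rwa [one_div, Real.rpow_inv_natCast_pow (norm_nonneg _) hn0] at hpow

variable {E : Type*} [NormedAddCommGroup E] [NormedSpace ℝ E] {T : E →L[ℝ] E} {r s : ℝ}

/-- The functional `s • ψ ∘ (s - T)⁻¹`, given by its Neumann series. -/
noncomputable def neumannFunctional (T : E →L[ℝ] E) (ψ : E →L[ℝ] ℝ) (s : ℝ) : E →L[ℝ] ℝ :=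
  ∑' k : ℕ, s⁻¹ ^ k • ψ.comp (T ^ k)

theorem hasSum_neumannFunctional (hT : HasPowerGrowthBound T r) (hr : 0 ≤ r) (hs : r < s)
    (ψ : E →L[ℝ] ℝ) (x : E) :
    HasSum (fun k : ℕ => s⁻¹ ^ k * ψ ((T ^ k) x)) (neumannFunctional T ψ s x) := by
  obtain ⟨t, hrt, hts⟩ := exists_between hs
  have ht : 0 ≤ t := hr.trans hrt.le
  have hs0 : 0 < s := hr.trans_lt hs
  have hsum : Summable fun k : ℕ => s⁻¹ ^ k • ψ.comp (T ^ k) := by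
    refine ((summable_geometric_of_lt_one (div_nonneg ht hs0.le)
      ((div_lt_one hs0).2 hts)).mul_left ‖ψ‖).of_norm_bounded_eventually_nat ?_
    filter_upwards [hT t hrt] with k hk
    calc ‖s⁻¹ ^ k • ψ.comp (T ^ k)‖ = s⁻¹ ^ k * ‖ψ.comp (T ^ k)‖ := by
          rw [norm_smul, Real.norm_of_nonneg (by positivity)]
      _ ≤ s⁻¹ ^ k * (‖ψ‖ * t ^ k) := by
          gcongr
          exact (ContinuousLinearMap.opNorm_comp_le _ _).trans (by gcongr)
      _ = ‖ψ‖ * (t / s) ^ k := by rw [div_eq_mul_inv, mul_pow]; ring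
  simpa [neumannFunctional] using hsum.hasSum.mapL (ContinuousLinearMap.apply ℝ ℝ x)

theorem neumannFunctional_apply_apply (hT : HasPowerGrowthBound T r) (hr : 0 ≤ r) (hs : r < s)
    (ψ : E →L[ℝ] ℝ) (x : E) :
    neumannFunctional T ψ s (T x) = s * (neumannFunctional T ψ s x - ψ x) := by
  have hs0 : s ≠ 0 := (hr.trans_lt hs).ne'
  have htail : HasSum (fun k : ℕ => s⁻¹ ^ (k + 1) * ψ ((T ^ (k + 1)) x))
      (neumannFunctional T ψ s x - ψ x) := by
    simpa using (hasSum_nat_add_iff' 1).2 (hasSum_neumannFunctional hT hr hs ψ x)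
  have hterm (k : ℕ) : s * (s⁻¹ ^ (k + 1) * ψ ((T ^ (k + 1)) x)) = s⁻¹ ^ k * ψ ((T ^ k) (T x)) := by
    rw [pow_succ T, mul_apply_eq_comp, pow_succ', mul_assoc, mul_inv_cancel_left₀ hs0]
  refine (hasSum_neumannFunctional hT hr hs ψ (T x)).unique ?_
  simpa only [hterm] using htail.mul_left s

theorem tendsto_norm_neumannFunctional_atTop (hT : HasPowerGrowthBound T r) (hr : 0 < r)
    {ψ : E →L[ℝ] ℝ} {e : E} {c : ℝ} (hc : 0 < c) (hψ : ∀ k : ℕ, c * r ^ k ≤ ψ ((T ^ k) e)) :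
    Tendsto (fun s => ‖neumannFunctional T ψ s‖) (𝓝[>] r) atTop := by
  have he : e ≠ 0 := by
    rintro rfl
    exact hc.not_ge (by simpa using hψ 0)
  have hgeom : Tendsto (fun s => c * (1 - r / s)⁻¹) (𝓝[>] r) atTop := by
    refine .const_mul_atTop hc (tendsto_inv_nhdsGT_zero.comp (tendsto_nhdsWithin_iff.2 ⟨?_, ?_⟩))
    · have hcont : ContinuousAt (fun s => 1 - r / s) r := by fun_prop (disch := exact hr.ne')
      simpa [ContinuousAt, hr.ne'] using hcont.tendsto.mono_left nhdsWithin_le_nhds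
    · filter_upwards [self_mem_nhdsWithin] with s (hs : r < s)
      exact sub_pos.2 ((div_lt_one (hr.trans hs)).2 hs)
  refine (tendsto_atTop_mono' _ ?_ hgeom).atTop_of_mul_const₀ (norm_pos_iff.2 he)
  filter_upwards [self_mem_nhdsWithin] with s (hs : r < s)
  have hs0 : 0 < s := hr.trans hs
  have hlower : c * (1 - r / s)⁻¹ ≤ neumannFunctional T ψ s e := by
    refine hasSum_le (fun k => ?_) ((hasSum_geometric_of_lt_one (by positivity)
      ((div_lt_one hs0).2 hs)).mul_left c) (hasSum_neumannFunctional hT hr.le hs ψ e)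
    calc c * (r / s) ^ k = s⁻¹ ^ k * (c * r ^ k) := by rw [div_eq_mul_inv, mul_pow]; ring
      _ ≤ s⁻¹ ^ k * ψ ((T ^ k) e) := by gcongr; exact hψ k
  exact hlower.trans ((le_abs_self _).trans ((neumannFunctional T ψ s).le_opNorm e))

theorem pow_apply_nonneg [PartialOrder E] (hT : ∀ x, 0 ≤ x → 0 ≤ T x) (k : ℕ) {x : E}
    (hx : 0 ≤ x) : 0 ≤ (T ^ k) x := by
  induction k with
  | zero => exact hx
  | succ k ih => rw [pow_succ']; exact hT _ ih

theorem neumannFunctional_nonneg [PartialOrder E] (hgrowth : HasPowerGrowthBound T r)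
    (hr : 0 ≤ r) (hs : r < s) (hT : ∀ x, 0 ≤ x → 0 ≤ T x) {ψ : E →L[ℝ] ℝ}
    (hψ : ∀ x, 0 ≤ x → 0 ≤ ψ x) {x : E} (hx : 0 ≤ x) : 0 ≤ neumannFunctional T ψ s x :=
  have hs0 : 0 ≤ s := hr.trans hs.le
  (hasSum_neumannFunctional hgrowth hr hs ψ x).nonneg fun k =>
    mul_nonneg (by positivity) (hψ _ (pow_apply_nonneg hT k hx))

theorem tendsto_norm_normalized_neumannFunctional_comp (hT : HasPowerGrowthBound T r)
    (hr : 0 ≤ r) {ψ : E →L[ℝ] ℝ}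
    (hψ : Tendsto (fun s => ‖neumannFunctional T ψ s‖) (𝓝[>] r) atTop) :
    Tendsto (fun s => ‖(‖neumannFunctional T ψ s‖⁻¹ • neumannFunctional T ψ s).comp (r • 1 - T)‖)
      (𝓝[>] r) (𝓝 0) := by
  set χ := neumannFunctional T ψ with hχ
  have hlim : Tendsto (fun s => |r - s| + |s| * ‖χ s‖⁻¹ * ‖ψ‖) (𝓝[>] r) (𝓝 0) := by
    have hid : Tendsto id (𝓝[>] r) (𝓝 r) := nhdsWithin_le_nhds
    simpa using (hid.const_sub r).abs.add ((hid.abs.mul hψ.inv_tendsto_atTop).mul_const ‖ψ‖)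
  refine squeeze_zero' (.of_forall fun _ => norm_nonneg _) ?_ hlim
  filter_upwards [self_mem_nhdsWithin, hψ.eventually_ne_atTop 0] with s (hs : r < s) hs0
  have hdefect : (‖χ s‖⁻¹ • χ s).comp (r • 1 - T)
      = ((r - s) * ‖χ s‖⁻¹) • χ s + (s * ‖χ s‖⁻¹) • ψ := by
    ext x
    simp [hχ, neumannFunctional_apply_apply hT hr hs]
    ring
  rw [hdefect]
  refine (norm_add_le _ _).trans_eq ?_
  simp [norm_smul, hs0]

theorem exists_nonneg_eigenfunctional [PartialOrder E] (hgrowth : HasPowerGrowthBound T r)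
    (hr : 0 < r) (hT : ∀ x, 0 ≤ x → 0 ≤ T x) {R : E →L[ℝ] E}
    (hR : IsCompactOperator ⇑(1 - (r • 1 - T) * R)) {ψ : E →L[ℝ] ℝ} (hψ : ∀ x, 0 ≤ x → 0 ≤ ψ x)
    {e : E} {c : ℝ} (hc : 0 < c) (hψe : ∀ k : ℕ, c * r ^ k ≤ ψ ((T ^ k) e)) :
    ∃ φ : E →L[ℝ] ℝ, φ ≠ 0 ∧ (∀ x, 0 ≤ x → 0 ≤ φ x) ∧ ∀ x, φ (T x) = r * φ x := by
  let χ := neumannFunctional T ψ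
  have hχ : Tendsto (fun s => ‖χ s‖) (𝓝[>] r) atTop :=
    tendsto_norm_neumannFunctional_atTop hgrowth hr hc hψe
  have hdefect := tendsto_norm_normalized_neumannFunctional_comp hgrowth hr.le hχ
  have hnorm : ∀ᶠ s in 𝓝[>] r, ‖‖χ s‖⁻¹ • χ s‖ = 1 := by
    filter_upwards [hχ.eventually_ne_atTop 0] with s hs
    exact norm_smul_inv_norm (𝕜 := ℝ) (norm_ne_zero_iff.1 hs)
  obtain ⟨φ, l, hφ, hl, hlim⟩ :=
    exists_tendsto_ne_zero_of_isCompactOperator_one_sub hnorm hdefect hR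
  refine ⟨φ, hφ, fun x hx => ge_of_tendsto (hlim x) (hl ?_), fun x => ?_⟩
  · filter_upwards [self_mem_nhdsWithin] with s (hs : r < s)
    exact mul_nonneg (by positivity) (neumannFunctional_nonneg hgrowth hr.le hs hT hψ hx)
  · have hzero : Tendsto (fun s => (‖χ s‖⁻¹ • χ s) (r • x - T x)) l (𝓝 0) :=
      squeeze_zero_norm (fun s => ((‖χ s‖⁻¹ • χ s).comp (r • 1 - T)).le_opNorm x)
        (by simpa using (hdefect.mono_left hl).mul_const ‖x‖)
    have heq := tendsto_nhds_unique (hlim _) hzero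
    rw [map_sub, map_smul, sub_eq_zero] at heq
    exact heq.symm

end NeumannSeries

section VectorLattice

variable {X : Type*} [AddCommGroup X] [Lattice X] [IsOrderedAddMonoid X]

theorem inf_add_le_inf_add_inf {x y z : X} (hx : 0 ≤ x) (hy : 0 ≤ y) (hz : 0 ≤ z) :
    x ⊓ (y + z) ≤ x ⊓ y + x ⊓ z := by
  rw [add_inf, inf_add, inf_add]
  refine le_inf (le_inf ?_ ?_) (le_inf ?_ inf_le_right)
  · exact inf_le_left.trans (le_add_of_nonneg_left hx)
  · exact inf_le_left.trans (le_add_of_nonneg_left hy)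
  · exact inf_le_left.trans (le_add_of_nonneg_right hz)

theorem inf_nsmul_le_nsmul_inf {x y : X} (hx : 0 ≤ x) (hy : 0 ≤ y) (n : ℕ) :
    x ⊓ n • y ≤ n • (x ⊓ y) := by
  induction n with
  | zero => simp
  | succ n ih =>
    rw [succ_nsmul, succ_nsmul]
    exact (inf_add_le_inf_add_inf hx (nsmul_nonneg hy n) hy).trans (by gcongr)

theorem abs_smul_eq_abs_smul_abs {𝕜 : Type*} [Field 𝕜] [LinearOrder 𝕜] [IsStrictOrderedRing 𝕜]
    [Module 𝕜 X] [PosSMulMono 𝕜 X] (a : 𝕜) (x : X) : |a • x| = |a| • |x| := by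
  have hpos {b : 𝕜} (hb : 0 < b) : |b • x| = b • |x| := by
    rw [abs, ← smul_neg]
    exact ((OrderIso.smulRight (β := X) hb).map_sup x (-x)).symm
  rcases lt_trichotomy a 0 with ha | rfl | ha
  · rw [abs_of_neg ha, ← hpos (neg_pos.2 ha), neg_smul, abs_neg]
  · simp
  · rw [abs_of_pos ha, hpos ha]

theorem eq_zero_of_abs_nonpos {x : X} (h : |x| ≤ 0) : x = 0 :=
  ((le_abs_self x).trans h).antisymm (neg_nonpos.1 ((neg_le_abs x).trans h))

theorem abs_map_le_map_abs {Y F : Type*} [AddCommGroup Y] [Lattice Y] [IsOrderedAddMonoid Y]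
    [FunLike F X Y] [AddMonoidHomClass F X Y] {T : F} (hT : ∀ x, 0 ≤ x → 0 ≤ T x) (x : X) :
    |T x| ≤ T |x| := by
  have hmono : Monotone T := (monotone_iff_map_nonneg T).2 hT
  exact abs_le'.2 ⟨hmono (le_abs_self x), by rw [← map_neg]; exact hmono (neg_le_abs x)⟩

theorem abs_apply_le_norm_smul [Module ℝ X] [PosSMulMono ℝ X] (J : ℂ →ₗ[ℝ] X) (w : ℂ) :
    |J w| ≤ ‖w‖ • (|J 1| + |J Complex.I|) := by
  have hw : J w = w.re • J 1 + w.im • J Complex.I := by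
    rw [← map_smul, ← map_smul, ← map_add, Complex.real_smul, Complex.real_smul, mul_one,
      Complex.re_add_im]
  rw [hw, smul_add]
  refine (abs_add_le _ _).trans (add_le_add ?_ ?_) <;> rw [abs_smul_eq_abs_smul_abs]
  · exact smul_le_smul_of_nonneg_right (Complex.abs_re_le_norm w) (abs_nonneg _)
  · exact smul_le_smul_of_nonneg_right (Complex.abs_im_le_norm w) (abs_nonneg _)

end VectorLattice

section BanachLattice

variable {X : Type*} [NormedAddCommGroup X] [Lattice X]

/-- Quasi-interior points of the positive cone of a Banach lattice; in `Lp` with `p ≠ ∞`, the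
functions that are positive almost everywhere. -/
def IsQuasiInterior (h : X) : Prop :=
  0 ≤ h ∧ ∀ u, 0 ≤ u → Tendsto (fun n : ℕ => u ⊓ n • h) atTop (𝓝 u)

theorem IsQuasiInterior.inf_ne_zero [IsOrderedAddMonoid X] {h u : X} (hh : IsQuasiInterior h)
    (hu : 0 ≤ u) (hu0 : u ≠ 0) : u ⊓ h ≠ 0 := by
  intro hinf
  have hzero (n : ℕ) : u ⊓ n • h = 0 :=
    le_antisymm ((inf_nsmul_le_nsmul_inf hu hh.1 n).trans_eq (by rw [hinf, nsmul_zero]))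
      (le_inf hu (nsmul_nonneg hh.1 n))
  refine hu0 (tendsto_nhds_unique (hh.2 u hu) ?_)
  simpa only [hzero] using tendsto_const_nhds

/-- Strong positivity of an operator on a Banach lattice: nonzero positive vectors are mapped to
quasi-interior points of the positive cone. -/
def IsStronglyPositive [NormedSpace ℝ X] (T : X →L[ℝ] X) : Prop :=
  ∀ u, 0 ≤ u → u ≠ 0 → IsQuasiInterior (T u)

variable [NormedSpace ℝ X] {T : X →L[ℝ] X} {φ : X →L[ℝ] ℝ}

theorem IsStronglyPositive.map_nonneg (hT : IsStronglyPositive T) {u : X} (hu : 0 ≤ u) :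
    0 ≤ T u := by
  rcases eq_or_ne u 0 with rfl | hu0
  · rw [map_zero]
  · exact (hT u hu hu0).1

variable [IsOrderedAddMonoid X]

theorem IsQuasiInterior.eq_zero_of_apply_eq_zero {h : X} (hh : IsQuasiInterior h)
    (hφ : ∀ x, 0 ≤ x → 0 ≤ φ x) (h0 : φ h = 0) : φ = 0 := by
  have hmono : Monotone φ := (monotone_iff_map_nonneg φ).2 hφ
  have hzero {u : X} (hu : 0 ≤ u) : φ u = 0 := by
    have hinf (n : ℕ) : φ (u ⊓ n • h) = 0 :=
      le_antisymm ((hmono inf_le_right).trans_eq (by rw [map_nsmul, h0, nsmul_zero]))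
        (hφ _ (le_inf hu (nsmul_nonneg hh.1 n)))
    refine tendsto_nhds_unique ((φ.continuous.tendsto u).comp (hh.2 u hu)) ?_
    simpa only [Function.comp_def, hinf] using tendsto_const_nhds
  ext x
  rw [← posPart_sub_negPart x, map_sub, hzero (posPart_nonneg x), hzero (negPart_nonneg x)]
  simp

theorem IsStronglyPositive.eigenfunctional_pos (hT : IsStronglyPositive T) (hφ0 : φ ≠ 0)
    (hφ : ∀ x, 0 ≤ x → 0 ≤ φ x) {r : ℝ} (hφT : ∀ x, φ (T x) = r * φ x) {u : X} (hu : 0 ≤ u)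
    (hu0 : u ≠ 0) : 0 < φ u := by
  refine (hφ u hu).lt_of_ne' fun hzero => hφ0 ?_
  exact (hT u hu hu0).eq_zero_of_apply_eq_zero hφ (by rw [hφT, hzero, mul_zero])

theorem IsStronglyPositive.apply_abs_map_lt (hT : IsStronglyPositive T)
    (hφ : ∀ u, 0 ≤ u → u ≠ 0 → 0 < φ u) {x : X} (hpos : ¬x ≤ 0) (hneg : ¬0 ≤ x) :
    φ |T x| < φ (T |x|) := by
  have hp : x⁺ ≠ 0 := mt posPart_eq_zero.1 hpos
  have hn : x⁻ ≠ 0 := mt negPart_eq_zero.1 hneg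
  have hTp := hT _ (posPart_nonneg x) hp
  have hTn := hT _ (negPart_nonneg x) hn
  have hTn0 : T x⁻ ≠ 0 := fun h => hTn.inf_ne_zero (negPart_nonneg x) hn (by
    rw [h]; exact inf_eq_right.2 (negPart_nonneg x))
  have hdefect : T |x| - |T x| = 2 • (T x⁻ ⊓ T x⁺) := by
    rw [two_nsmul_inf_eq_add_sub_abs_sub, ← map_add, ← map_sub, add_comm, posPart_add_negPart,
      posPart_sub_negPart]
  have hgap := hφ _ (le_inf hTn.1 hTp.1) (hTp.inf_ne_zero hTn.1 hTn0)
  rw [← sub_pos, ← map_sub, hdefect, map_nsmul]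
  exact nsmul_pos hgap two_ne_zero

variable [HasSolidNorm X] [PosSMulMono ℝ X]

theorem exists_nonneg_functional_apply_pos {e : X} (he : 0 ≤ e) (he0 : e ≠ 0) :
    ∃ ψ : X →L[ℝ] ℝ, (∀ x, 0 ≤ x → 0 ≤ ψ x) ∧ 0 < ψ e := by
  have hmem : -e ∉ ProperCone.positive ℝ X := fun h =>
    he0 (le_antisymm (neg_nonneg.1 (ProperCone.mem_positive.1 h)) he)
  obtain ⟨ψ, hψ, hlt⟩ := (ProperCone.positive ℝ X).hyperplane_separation_point hmem
  exact ⟨ψ, fun x hx => hψ x hx, by simpa using hlt⟩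

end BanachLattice

section ComplexEigenvalue

/- An eigenvector `x + i y` of the complexification of `T`, with eigenvalue `z`, is encoded by the
real-linear map `J w = Re (w (x + i y))`, which satisfies `T (J w) = J (z w)`. -/
variable {X : Type*} [NormedAddCommGroup X] [NormedSpace ℝ X] {T : X →L[ℝ] X} {φ : X →L[ℝ] ℝ}
  {J : ℂ →ₗ[ℝ] X} {z : ℂ}

theorem pow_apply_intertwining (hJ : ∀ w, T (J w) = J (z * w)) (k : ℕ) (w : ℂ) :
    (T ^ k) (J w) = J (z ^ k * w) := by
  induction k with
  | zero => simp
  | succ k ih => rw [pow_succ', mul_apply_eq_comp, ih, hJ, pow_succ', mul_assoc]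

theorem apply_intertwining_eq_zero (hφT : ∀ x, φ (T x) = ‖z‖ * φ x)
    (hJ : ∀ w, T (J w) = J (z * w)) (hz : z ≠ ‖z‖) (w : ℂ) : φ (J w) = 0 := by
  have hsub : z - ‖z‖ ≠ 0 := sub_ne_zero.2 hz
  have hdiff (v : ℂ) : φ (J ((z - ‖z‖) * v)) = 0 := by
    rw [sub_mul, ← Complex.real_smul, map_sub, map_smul, map_sub, map_smul, ← hJ, hφT,
      smul_eq_mul, sub_self]
  simpa only [mul_inv_cancel_left₀ hsub] using hdiff ((z - ‖z‖)⁻¹ * w)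

variable [Lattice X] [IsOrderedAddMonoid X]

theorem norm_pow_smul_le_pow_apply [PosSMulMono ℝ X] (hT : ∀ x, 0 ≤ x → 0 ≤ T x)
    (hJ : ∀ w, T (J w) = J (z * w)) (hz : z ≠ 0) (k : ℕ) :
    ‖z‖ ^ k • (|J 1| + |J Complex.I|) ≤ 2 • (T ^ k) (|J 1| + |J Complex.I|) := by
  set e := |J 1| + |J Complex.I|
  have hzk : 0 < ‖z ^ k‖ := norm_pos_iff.2 (pow_ne_zero k hz)
  have hbound {w : ℂ} (hw : ‖w‖ = 1) : |J w| ≤ ‖z ^ k‖⁻¹ • (T ^ k) e := by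
    let J' : ℂ →ₗ[ℝ] X := J ∘ₗ LinearMap.mulLeft ℝ (z ^ k)
    have hJ' (v : ℂ) : |J' v| ≤ (T ^ k) |J v| := by
      rw [show J' v = (T ^ k) (J v) from (pow_apply_intertwining hJ k v).symm]
      exact abs_map_le_map_abs (fun _ => pow_apply_nonneg hT k) (J v)
    calc |J w| = |J' ((z ^ k)⁻¹ * w)| := by
          simp [J', mul_inv_cancel_left₀ (pow_ne_zero k hz)]
      _ ≤ ‖(z ^ k)⁻¹ * w‖ • (|J' 1| + |J' Complex.I|) := abs_apply_le_norm_smul J' _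
      _ ≤ ‖z ^ k‖⁻¹ • (T ^ k) e := by
          rw [norm_mul, hw, mul_one, norm_inv, map_add]
          exact smul_le_smul_of_nonneg_left (add_le_add (hJ' 1) (hJ' Complex.I)) (by positivity)
  have he : e ≤ ‖z ^ k‖⁻¹ • 2 • (T ^ k) e := by
    rw [two_nsmul, smul_add]
    exact add_le_add (hbound (by simp)) (hbound (by simp))
  calc ‖z‖ ^ k • e = ‖z ^ k‖ • e := by rw [norm_pow]
    _ ≤ ‖z ^ k‖ • ‖z ^ k‖⁻¹ • 2 • (T ^ k) e := smul_le_smul_of_nonneg_left he hzk.le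
    _ = 2 • (T ^ k) e := smul_inv_smul₀ hzk.ne' _

theorem IsStronglyPositive.apply_abs_intertwining_lt (hT : IsStronglyPositive T)
    (hφ : ∀ u, 0 ≤ u → u ≠ 0 → 0 < φ u) (hφT : ∀ x, φ (T x) = ‖z‖ * φ x)
    (hJ : ∀ w, T (J w) = J (z * w)) (hz : z ≠ ‖z‖) {w : ℂ} (hw : J w ≠ 0) :
    φ |J (z * w)| < ‖z‖ * φ |J w| := by
  have h0 := apply_intertwining_eq_zero hφT hJ hz w
  rw [← hJ, ← hφT]
  refine hT.apply_abs_map_lt hφ (fun hnonpos => ?_) fun hnonneg => (hφ _ hnonneg hw).ne' h0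
  refine (hφ _ (neg_nonneg.2 hnonpos) (neg_ne_zero.2 hw)).ne' ?_
  rw [map_neg, h0, neg_zero]

variable [HasSolidNorm X]

theorem exists_pos_eigenfunctional [PosSMulMono ℝ X] (hT : IsStronglyPositive T)
    (hgrowth : HasPowerGrowthBound T ‖z‖) {R : X →L[ℝ] X}
    (hR : IsCompactOperator ⇑(1 - (‖z‖ • 1 - T) * R)) (hz : z ≠ 0) (hJ0 : J ≠ 0)
    (hJ : ∀ w, T (J w) = J (z * w)) :
    ∃ φ : X →L[ℝ] ℝ, (∀ u, 0 ≤ u → u ≠ 0 → 0 < φ u) ∧ ∀ x, φ (T x) = ‖z‖ * φ x := by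
  set e := |J 1| + |J Complex.I| with he_def
  have he : 0 ≤ e := add_nonneg (abs_nonneg _) (abs_nonneg _)
  have he0 : e ≠ 0 := by
    intro he0
    refine hJ0 (LinearMap.ext fun w => ?_)
    have hle := abs_apply_le_norm_smul J w
    rw [← he_def, he0, smul_zero] at hle
    exact eq_zero_of_abs_nonpos hle
  obtain ⟨ψ, hψ, hψe⟩ := exists_nonneg_functional_apply_pos he he0
  have hψk (k : ℕ) : ψ e / 2 * ‖z‖ ^ k ≤ ψ ((T ^ k) e) := by
    have := (monotone_iff_map_nonneg ψ).2 hψ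
      (norm_pow_smul_le_pow_apply (fun _ => hT.map_nonneg) hJ hz k)
    rw [map_smul, map_nsmul, smul_eq_mul, nsmul_eq_mul, Nat.cast_ofNat, ← he_def] at this
    linarith
  obtain ⟨φ, hφ0, hφ, hφT⟩ := exists_nonneg_eigenfunctional hgrowth (norm_pos_iff.2 hz)
    (fun _ => hT.map_nonneg) hR hψ (half_pos hψe) hψk
  exact ⟨φ, fun u => hT.eigenfunctional_pos hφ0 hφ hφT, hφT⟩

theorem exists_isMaxOn_sphere_apply_abs (hφ : ∀ u, 0 ≤ u → u ≠ 0 → 0 < φ u) (hJ0 : J ≠ 0) :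
    ∃ w ∈ Metric.sphere (0 : ℂ) 1, J w ≠ 0 ∧
      IsMaxOn (fun w => φ |J w|) (Metric.sphere (0 : ℂ) 1) w := by
  have hcont : Continuous fun w => φ |J w| := by
    have hJ := J.continuous_of_finiteDimensional
    exact φ.continuous.comp (hJ.sup hJ.neg)
  obtain ⟨w, hw, hmax⟩ := (isCompact_sphere (0 : ℂ) 1).exists_isMaxOn
    (NormedSpace.sphere_nonempty.2 zero_le_one) hcont.continuousOn
  refine ⟨w, hw, fun hJw => hJ0 ?_, hmax⟩
  have hsphere {v : ℂ} (hv : ‖v‖ = 1) : J v = 0 := by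
    by_contra hJv
    have hlt := hφ _ (abs_nonneg _) fun h => hJv (eq_zero_of_abs_nonpos h.le)
    have hle : φ |J v| ≤ φ |J w| := hmax (mem_sphere_zero_iff_norm.2 hv)
    rw [hJw, abs_zero, map_zero] at hle
    exact hle.not_gt hlt
  refine Complex.basisOneI.ext fun i => ?_
  fin_cases i <;> simp [hsphere]

theorem eq_norm_of_isStronglyPositive [PosSMulMono ℝ X] (hT : IsStronglyPositive T)
    (hgrowth : HasPowerGrowthBound T ‖z‖) {R : X →L[ℝ] X}
    (hR : IsCompactOperator ⇑(1 - (‖z‖ • 1 - T) * R)) (hJ0 : J ≠ 0)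
    (hJ : ∀ w, T (J w) = J (z * w)) : z = ‖z‖ := by
  rcases eq_or_ne z 0 with rfl | hz
  · simp
  by_contra hne
  obtain ⟨φ, hφ, hφT⟩ := exists_pos_eigenfunctional hT hgrowth hR hz hJ0 hJ
  obtain ⟨w, hw, hJw, hmax⟩ := exists_isMaxOn_sphere_apply_abs hφ hJ0
  have hz' : ‖z‖ ≠ 0 := norm_ne_zero_iff.2 hz
  let v : ℂ := ‖z‖ / z * w
  have hzv : J (z * v) = ‖z‖ • J w := by
    rw [← mul_assoc, mul_div_cancel₀ _ hz, ← Complex.real_smul, map_smul]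
  have hv : v ∈ Metric.sphere (0 : ℂ) 1 := by
    simpa [v, hz'] using hw
  have hJv : J v ≠ 0 := fun h => smul_ne_zero hz' hJw (by rw [← hzv, ← hJ, h, map_zero])
  have hlt := hT.apply_abs_intertwining_lt hφ hφT hJ hne hJv
  rw [hzv, abs_smul_eq_abs_smul_abs, abs_norm, map_smul, smul_eq_mul] at hlt
  exact (mul_le_mul_of_nonneg_left (hmax hv) (norm_nonneg z)).not_gt hlt

end ComplexEigenvalue

section LpQuasiInterior

variable {α : Type*} [MeasurableSpace α] {μ : Measure α} {p : ℝ≥0∞} [Fact (1 ≤ p)]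

theorem tendsto_Lp_of_dominated {ι E F : Type*} [NormedAddCommGroup E] [NormedAddCommGroup F]
    (hp : p ≠ ∞) {l : Filter ι} [l.IsCountablyGenerated] {f : ι → Lp E p μ} {f₀ : Lp E p μ}
    (g : Lp F p μ) (hbound : ∀ᶠ i in l, ∀ᵐ x ∂μ, ‖f i x - f₀ x‖ ≤ ‖g x‖)
    (hlim : ∀ᵐ x ∂μ, Tendsto (fun i => f i x) l (𝓝 (f₀ x))) : Tendsto f l (𝓝 f₀) := by
  have hp0 : p ≠ 0 := (one_pos.trans_le Fact.out).ne'
  have hpt : 0 < p.toReal := toReal_pos hp0 hp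
  rw [Lp.tendsto_Lp_iff_tendsto_eLpNorm']
  simp_rw [eLpNorm_eq_lintegral_rpow_enorm_toReal hp0 hp]
  have hlintegral : Tendsto (fun i => ∫⁻ x, ‖(⇑(f i) - ⇑f₀) x‖ₑ ^ p.toReal ∂μ) l
      (𝓝 (∫⁻ _, 0 ∂μ)) := by
    refine tendsto_lintegral_filter_of_dominated_convergence (fun x => ‖g x‖ₑ ^ p.toReal)
      (.of_forall fun i => ?_) ?_
      (lintegral_rpow_enorm_lt_top_of_eLpNorm_lt_top hp0 hp (Lp.eLpNorm_lt_top g)).ne ?_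
    · exact ((Lp.stronglyMeasurable _).sub (Lp.stronglyMeasurable _)).enorm.pow_const _
    · filter_upwards [hbound] with i hi
      filter_upwards [hi] with x hx
      gcongr
      exact enorm_le_iff_norm_le.2 hx
    · filter_upwards [hlim] with x hx
      have hsub : Tendsto (fun i => f i x - f₀ x) l (𝓝 0) := by simpa using hx.sub_const (f₀ x)
      simpa [hpt] using hsub.enorm.ennrpow_const p.toReal
  simpa [hpt] using hlintegral.ennrpow_const (1 / p.toReal)

theorem eventually_inf_nsmul_eq {M : Type*} [AddCommMonoid M] [LinearOrder M]
    [IsOrderedAddMonoid M] [Archimedean M] (u : M) {h : M} (hh : 0 < h) :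
    ∀ᶠ n : ℕ in atTop, u ⊓ n • h = u := by
  obtain ⟨N, hN⟩ := Archimedean.arch u hh
  filter_upwards [eventually_ge_atTop N] with n hn
  exact inf_eq_left.2 (hN.trans (nsmul_le_nsmul_left hh.le hn))

theorem isQuasiInterior_of_ae_pos (hp : p ≠ ∞) {h : Lp ℝ p μ} (hh : ∀ᵐ x ∂μ, 0 < h x) :
    IsQuasiInterior h := by
  refine ⟨(Lp.coeFn_nonneg h).1 (hh.mono fun _ hx => hx.le), fun u hu => ?_⟩
  have hcoe (n : ℕ) : ∀ᵐ x ∂μ, (u ⊓ n • h) x = u x ⊓ n • h x := by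
    filter_upwards [Lp.coeFn_inf u (n • h), Lp.coeFn_smul (n : ℝ) h] with x hinf hsmul
    rw [hinf, Pi.inf_apply, ← Nat.cast_smul_eq_nsmul ℝ n h, hsmul, Pi.smul_apply,
      Nat.cast_smul_eq_nsmul]
  refine tendsto_Lp_of_dominated hp u (.of_forall fun n => ?_) ?_
  · filter_upwards [hcoe n, hh, (Lp.coeFn_nonneg u).2 hu] with x hx hhx (hux : 0 ≤ u x)
    have hnonneg : 0 ≤ u x ⊓ n • h x := le_inf hux (nsmul_nonneg hhx.le n)
    rw [hx, Real.norm_of_nonpos (sub_nonpos.2 inf_le_left), Real.norm_of_nonneg hux]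
    linarith
  · filter_upwards [ae_all_iff.2 hcoe, hh] with x hx hhx
    exact tendsto_nhds_of_eventually_eq ((eventually_inf_nsmul_eq _ hhx).mono fun n hn =>
      (hx n).trans hn)

instance posSMulMono_Lp : PosSMulMono ℝ (Lp ℝ p μ) where
  smul_le_smul_of_nonneg_left c hc f g hfg := by
    rw [← Lp.coeFn_le] at hfg ⊢
    filter_upwards [hfg, Lp.coeFn_smul c f, Lp.coeFn_smul c g] with x hx hf hg
    rw [hf, hg]
    exact smul_le_smul_of_nonneg_left hx hc

end LpQuasiInterior

section RealRestriction

variable {α : Type*} [MeasurableSpace α] {μ : Measure α} {p : ℝ≥0∞} [Fact (1 ≤ p)]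

/-- The real part `L^p(μ; ℂ) → L^p(μ; ℝ)`. -/
noncomputable def lpRe : Lp ℂ p μ →L[ℝ] Lp ℝ p μ :=
  Complex.reCLM.compLpL p μ

/-- The inclusion `L^p(μ; ℝ) → L^p(μ; ℂ)`. -/
noncomputable def lpOfReal : Lp ℝ p μ →L[ℝ] Lp ℂ p μ :=
  Complex.ofRealCLM.compLpL p μ

theorem coeFn_lpRe (f : Lp ℂ p μ) : ∀ᵐ x ∂μ, lpRe f x = (f x).re :=
  Complex.reCLM.coeFn_compLpL f

theorem coeFn_lpOfReal (u : Lp ℝ p μ) : ∀ᵐ x ∂μ, lpOfReal u x = (u x : ℂ) :=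
  Complex.ofRealCLM.coeFn_compLpL u

theorem norm_lpRe_le : ‖(lpRe : Lp ℂ p μ →L[ℝ] Lp ℝ p μ)‖ ≤ 1 :=
  (ContinuousLinearMap.norm_compLpL_le _).trans_eq Complex.reCLM_norm

theorem norm_lpOfReal_le : ‖(lpOfReal : Lp ℝ p μ →L[ℝ] Lp ℂ p μ)‖ ≤ 1 :=
  (ContinuousLinearMap.norm_compLpL_le _).trans_eq Complex.ofRealCLM_norm

theorem lpRe_lpOfReal (u : Lp ℝ p μ) : lpRe (lpOfReal u) = u := by
  refine Lp.ext ?_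
  filter_upwards [coeFn_lpRe (lpOfReal u), coeFn_lpOfReal u] with x hre hof
  rw [hre, hof, Complex.ofReal_re]

theorem lpRe_I_smul_lpOfReal (u : Lp ℝ p μ) : lpRe (Complex.I • lpOfReal u) = 0 := by
  refine Lp.ext ?_
  filter_upwards [coeFn_lpRe (Complex.I • lpOfReal u), coeFn_lpOfReal u,
    Lp.coeFn_smul Complex.I (lpOfReal u), Lp.coeFn_zero ℝ p μ] with x hre hof hsmul hzero
  rw [hre, hsmul, Pi.smul_apply, hof, hzero]
  simp

theorem lpOfReal_lpRe_add_I_smul (f : Lp ℂ p μ) :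
    lpOfReal (lpRe f) + Complex.I • lpOfReal (lpRe (-Complex.I • f)) = f := by
  refine Lp.ext ?_
  set g := lpOfReal (lpRe (-Complex.I • f)) with hg
  filter_upwards [Lp.coeFn_add (lpOfReal (lpRe f)) (Complex.I • g), coeFn_lpOfReal (lpRe f),
    coeFn_lpRe f, Lp.coeFn_smul Complex.I g, coeFn_lpOfReal (lpRe (-Complex.I • f)),
    coeFn_lpRe (-Complex.I • f), Lp.coeFn_smul (-Complex.I) f] with x hadd h₁ h₂ hsmul h₃ h₄ h₅
  rw [hadd, Pi.add_apply, h₁, h₂, hsmul, Pi.smul_apply, hg, h₃, h₄, h₅, Pi.smul_apply]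
  simp [Complex.ext_iff]

/-- The operator `u ↦ Re (U u)` on the real subspace; for an operator preserving real functions it
is the restriction of `U`. -/
noncomputable def realRestriction (U : Lp ℂ p μ →L[ℂ] Lp ℂ p μ) : Lp ℝ p μ →L[ℝ] Lp ℝ p μ :=
  lpRe ∘L U.restrictScalars ℝ ∘L lpOfReal

/-- `U` maps nonzero nonnegative real functions to functions positive almost everywhere. -/
def IsPositivityImproving (U : Lp ℂ p μ →L[ℂ] Lp ℂ p μ) : Prop :=
  ∀ f : Lp ℂ p μ, (∀ᵐ x ∂μ, (f x).im = 0 ∧ 0 ≤ (f x).re) → f ≠ 0 →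
    ∀ᵐ x ∂μ, ((U f) x).im = 0 ∧ 0 < ((U f) x).re

variable {U : Lp ℂ p μ →L[ℂ] Lp ℂ p μ}

theorem IsPositivityImproving.ae_pos (hU : IsPositivityImproving U) {u : Lp ℝ p μ} (hu : 0 ≤ u)
    (hu0 : u ≠ 0) : ∀ᵐ x ∂μ, (U (lpOfReal u) x).im = 0 ∧ 0 < (U (lpOfReal u) x).re := by
  refine hU _ ?_ fun h => hu0 (by rw [← lpRe_lpOfReal u, h, map_zero])
  filter_upwards [coeFn_lpOfReal u, (Lp.coeFn_nonneg u).2 hu] with x hof hx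
  simpa [hof] using hx

theorem isStronglyPositive_realRestriction (hp : p ≠ ∞) (hU : IsPositivityImproving U) :
    IsStronglyPositive (realRestriction U) := by
  refine fun u hu hu0 => isQuasiInterior_of_ae_pos hp ?_
  filter_upwards [hU.ae_pos hu hu0, coeFn_lpRe (U (lpOfReal u))] with x hpos hre
  exact hpos.2.trans_eq hre.symm

theorem IsPositivityImproving.apply_lpOfReal (hU : IsPositivityImproving U) (u : Lp ℝ p μ) :
    U (lpOfReal u) = lpOfReal (realRestriction U u) := by
  have hnonneg {v : Lp ℝ p μ} (hv : 0 ≤ v) : U (lpOfReal v) = lpOfReal (realRestriction U v) := by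
    rcases eq_or_ne v 0 with rfl | hv0
    · simp
    refine Lp.ext ?_
    filter_upwards [hU.ae_pos hv hv0, coeFn_lpOfReal (realRestriction U v),
      coeFn_lpRe (U (lpOfReal v))] with x hpos hof hre
    rw [hof]
    exact Complex.ext hre.symm hpos.1
  rw [← posPart_sub_negPart u]
  simp only [map_sub, hnonneg (posPart_nonneg u), hnonneg (negPart_nonneg u)]

theorem IsPositivityImproving.lpRe_apply (hU : IsPositivityImproving U) (f : Lp ℂ p μ) :
    lpRe (U f) = realRestriction U (lpRe f) := by
  conv_lhs => rw [← lpOfReal_lpRe_add_I_smul f]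
  rw [map_add, map_smul, hU.apply_lpOfReal, hU.apply_lpOfReal, map_add, lpRe_lpOfReal,
    lpRe_I_smul_lpOfReal, add_zero]

theorem IsPositivityImproving.lpRe_pow_apply (hU : IsPositivityImproving U) (n : ℕ) (f : Lp ℂ p μ) :
    lpRe ((U ^ n) f) = (realRestriction U ^ n) (lpRe f) := by
  induction n with
  | zero => rfl
  | succ n ih => rw [pow_succ', pow_succ', mul_apply_eq_comp, mul_apply_eq_comp, hU.lpRe_apply, ih]

theorem IsPositivityImproving.norm_realRestriction_pow_le (hU : IsPositivityImproving U) (n : ℕ) :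
    ‖realRestriction U ^ n‖ ≤ ‖U ^ n‖ := by
  have hpow : realRestriction U ^ n = lpRe ∘L (U ^ n).restrictScalars ℝ ∘L lpOfReal := by
    ext1 u
    exact ((hU.lpRe_pow_apply n _).trans (congrArg _ (lpRe_lpOfReal u))).symm
  calc ‖realRestriction U ^ n‖ ≤ ‖(lpRe : Lp ℂ p μ →L[ℝ] Lp ℝ p μ)‖ *
        (‖(U ^ n).restrictScalars ℝ‖ * ‖(lpOfReal : Lp ℝ p μ →L[ℝ] Lp ℂ p μ)‖) := by
        rw [hpow]
        refine (ContinuousLinearMap.opNorm_comp_le _ _).trans ?_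
        gcongr
        exact ContinuousLinearMap.opNorm_comp_le _ _
    _ ≤ 1 * (‖U ^ n‖ * 1) := by
        rw [ContinuousLinearMap.norm_restrictScalars]
        gcongr
        exacts [norm_lpRe_le, norm_lpOfReal_le]
    _ = ‖U ^ n‖ := by rw [one_mul, mul_one]

theorem IsPositivityImproving.hasPowerGrowthBound_realRestriction (hU : IsPositivityImproving U)
    {r : ℝ} (h : HasPowerGrowthBound U r) : HasPowerGrowthBound (realRestriction U) r :=
  fun t ht => (h t ht).mono fun n hn => (hU.norm_realRestriction_pow_le n).trans hn

theorem IsPositivityImproving.isCompactOperator_realRestriction (hU : IsPositivityImproving U)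
    {r : ℝ} {R : Lp ℂ p μ →L[ℂ] Lp ℂ p μ} (h : IsCompactOperator ⇑(1 - ((r : ℂ) • 1 - U) * R)) :
    IsCompactOperator ⇑(1 - (r • 1 - realRestriction U) * realRestriction R) := by
  have heq : ⇑(1 - (r • 1 - realRestriction U) * realRestriction R) =
      lpRe ∘ ⇑(1 - ((r : ℂ) • 1 - U) * R) ∘ lpOfReal := by
    ext1 u
    have hsmul : lpRe ((r : ℂ) • R (lpOfReal u)) = r • realRestriction R u :=
      lpRe.map_smul r (R (lpOfReal u))
    calc u - (r • realRestriction R u - realRestriction U (realRestriction R u))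
        = lpRe (lpOfReal u) - (lpRe ((r : ℂ) • R (lpOfReal u)) - lpRe (U (R (lpOfReal u)))) := by
          rw [hsmul, lpRe_lpOfReal, hU.lpRe_apply]; rfl
      _ = lpRe (lpOfReal u - ((r : ℂ) • R (lpOfReal u) - U (R (lpOfReal u)))) := by
          rw [map_sub, map_sub]
  rw [heq]
  exact (h.comp_clm lpOfReal).clm_comp lpRe

/-- The real-linear map `w ↦ Re (w f)`. -/
noncomputable def reSMul (f : Lp ℂ p μ) : ℂ →ₗ[ℝ] Lp ℝ p μ :=
  lpRe.toLinearMap ∘ₗ (LinearMap.toSpanSingleton ℂ (Lp ℂ p μ) f).restrictScalars ℝ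

theorem reSMul_ne_zero {f : Lp ℂ p μ} (hf : f ≠ 0) : reSMul f ≠ 0 := by
  intro h
  have hre (w : ℂ) : lpRe (w • f) = 0 := LinearMap.congr_fun h w
  have hf1 := hre 1
  rw [one_smul] at hf1
  refine hf ?_
  rw [← lpOfReal_lpRe_add_I_smul f, hf1, hre, map_zero, smul_zero, add_zero]

end RealRestriction

theorem peripheral_point_spectrum_trivial_general
    {α : Type*} [MeasurableSpace α] {μ : Measure α} {p : ℝ≥0∞} [Fact (1 ≤ p)] (hp : p ≠ ∞)
    {U : Lp ℂ p μ →L[ℂ] Lp ℂ p μ} (hU : IsPositivityImproving U) {r : ℝ}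
    (hr : HasPowerGrowthBound U r)
    (hR : ∃ R : Lp ℂ p μ →L[ℂ] Lp ℂ p μ, IsCompactOperator ⇑(1 - ((r : ℂ) • 1 - U) * R))
    {z : ℂ} (hz : ‖z‖ = r) {f : Lp ℂ p μ} (hf : f ≠ 0) (hUf : U f = z • f) : z = r := by
  subst hz
  obtain ⟨R, hR⟩ := hR
  refine eq_norm_of_isStronglyPositive (isStronglyPositive_realRestriction hp hU)
    (hU.hasPowerGrowthBound_realRestriction hr) (hU.isCompactOperator_realRestriction hR)
    (reSMul_ne_zero hf) fun w => ?_
  change realRestriction U (lpRe (w • f)) = lpRe ((z * w) • f)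
  rw [← hU.lpRe_apply, map_smul, hUf, smul_smul, mul_comm w]

/-- **Theorem 2.4 iii).** Let `U` be a positive bounded linear operator on the complex space
`X_ℂ = L^p(E, μ; ℂ)` whose restriction to the real subspace is strictly positive, with
spectral radius `r(U) > 0` (Gelfand formula), admitting a splitting `U = W + K` with
`‖W‖ < r(U)` and `K (λ - W)⁻¹` power compact for every `λ ∈ ℂ` with `|λ| > ‖W‖`.
Then every eigenvalue of `U` of modulus `r(U)` equals `r(U)`: the peripheral point
spectrum of `Ũ = U / r(U)` is reduced to `{1}`. -/
theorem peripheral_point_spectrum_trivial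
    {α : Type*} [MeasurableSpace α] {μ : Measure α} [SigmaFinite μ]
    {p : ℝ≥0∞} [Fact (1 ≤ p)] (hp : p ≠ ∞)
    (U W K : Lp ℂ p μ →L[ℂ] Lp ℂ p μ)
    (hreal : ∀ f : Lp ℂ p μ, (∀ᵐ x ∂μ, (f x).im = 0) → (∀ᵐ x ∂μ, ((U f) x).im = 0))
    (hpos : ∀ f : Lp ℂ p μ, (∀ᵐ x ∂μ, (f x).im = 0 ∧ 0 ≤ (f x).re) →
      (∀ᵐ x ∂μ, ((U f) x).im = 0 ∧ 0 ≤ ((U f) x).re))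
    (hstrict : ∀ f : Lp ℂ p μ, (∀ᵐ x ∂μ, (f x).im = 0 ∧ 0 ≤ (f x).re) → f ≠ 0 →
      (∀ᵐ x ∂μ, ((U f) x).im = 0 ∧ 0 < ((U f) x).re))
    (r : ℝ) (hr : Tendsto (fun n : ℕ => ‖U ^ n‖ ^ (1 / (n : ℝ))) atTop (nhds r))
    (hr0 : 0 < r) (hsplit : U = W + K) (hW : ‖W‖ < r)
    (hcomp : ∀ lam : ℂ, ‖W‖ < ‖lam‖ → ∃ n : ℕ, 0 < n ∧
      IsCompactOperator ⇑((K * Ring.inverse (lam • (1 : Lp ℂ p μ →L[ℂ] Lp ℂ p μ) - W)) ^ n)) :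
    ∀ z : ℂ, ‖z‖ = r → (∃ f : Lp ℂ p μ, f ≠ 0 ∧ U f = z • f) → z = (r : ℂ) := by
  rintro z hz ⟨f, hf, hUf⟩
  have hrW : ‖W‖ < ‖(r : ℂ)‖ := by rwa [Complex.norm_of_nonneg hr0.le]
  obtain ⟨n, -, hn⟩ := hcomp r hrW
  exact peripheral_point_spectrum_trivial_general hp hstrict (hasPowerGrowthBound_of_tendsto hr)
    (hsplit ▸ exists_isCompactOperator_one_sub_smul_one_sub_add_mul hrW hn) hz hf hUf
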